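/- If (P, A_1,…,A_n) is a regular poset of width w ≥ 1, then every n-Grundy coloring of P satisfies n ≤ w^{2.5·lg(2w) + 2·lg(2w²+1)}; that is, First-Fit uses at most w^{2.5·lg(2w) + 2·lg(2w²+1)} chains on any regular poset of width w. -/

import Mathlib

/-- `S` is an antichain with respect to the order relation `le`. -/
def IsAntichainOn {α : Type*} (le : α → α → Prop) (S : Finset α) : Prop :=
  ∀ a ∈ S, ∀ b ∈ S, a ≠ b → ¬ le a b ∧ ¬ le b a

/-- The poset `(α, le)` has width `w`: there is an antichain of size `w`
and every antichain has size at most `w`. -/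
def IsWidth {α : Type*} (le : α → α → Prop) (w : ℕ) : Prop :=
  (∃ S : Finset α, IsAntichainOn le S ∧ S.card = w) ∧
    ∀ S : Finset α, IsAntichainOn le S → S.card ≤ w

/-- `g` is an `n`-Grundy coloring of the poset `(α, le)`:
`g` takes values in `{1,…,n}`, is surjective onto `{1,…,n}`,
each color class is a chain (G1), and each vertex of color `j`
has an incomparable witness of every smaller color (G3). -/
def IsGrundy {α : Type*} (le : α → α → Prop) (n : ℕ) (g : α → ℕ) : Prop :=
  (∀ v, 1 ≤ g v ∧ g v ≤ n) ∧
  (∀ i, 1 ≤ i → i ≤ n → ∃ v, g v = i) ∧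
  (∀ u v, g u = g v → le u v ∨ le v u) ∧
  (∀ v i, 1 ≤ i → i < g v → ∃ u, (¬ le u v ∧ ¬ le v u) ∧ g u = i)

/-- `c` is the First-Fit chain partition of the poset `(α, le)` presented in the
strict total order `prec`: every vertex `v` gets the least color `c v ≥ 1` such
that all `prec`-earlier vertices of the same color are comparable to `v`. -/
def IsFFColoring {α : Type*} (le prec : α → α → Prop) (c : α → ℕ) : Prop :=
  ∀ v, 1 ≤ c v ∧
    (∀ u, prec u v → c u = c v → le u v ∨ le v u) ∧
    (∀ j, 1 ≤ j → j < c v → ∃ u, prec u v ∧ c u = j ∧ ¬ le u v ∧ ¬ le v u)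

/-- The sequences `x` (lower leg) and `y` (upper leg) form an induced copy of
the `m`-ladder `L_m` in the poset `(α, le)`. -/
def IsLadderIn {α : Type*} (le : α → α → Prop) {m : ℕ} (x y : Fin m → α) : Prop :=
  (∀ i j : Fin m, i < j → le (x i) (x j) ∧ x i ≠ x j) ∧
  (∀ i j : Fin m, i < j → le (y i) (y j) ∧ y i ≠ y j) ∧
  (∀ i : Fin m, le (x i) (y i) ∧ x i ≠ y i) ∧
  (∀ i j : Fin m, i < j → ¬ le (y i) (x j) ∧ ¬ le (x j) (y i))

/-- The poset `(α, le)` contains no induced copy of the `m`-ladder `L_m`. -/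
def LFree {α : Type*} (le : α → α → Prop) (m : ℕ) : Prop :=
  ¬ ∃ x y : Fin m → α, IsLadderIn le x y

/-- `A ⊑ B`: every element of `A` is `le`-below some element of `B`. -/
def Below {α : Type*} (le : α → α → Prop) (A B : Finset α) : Prop :=
  ∀ a ∈ A, ∃ b ∈ B, le a b

/-- `A ⊏ B`: `A ⊑ B` and `A ≠ B`. -/
def StrictBelow {α : Type*} (le : α → α → Prop) (A B : Finset α) : Prop :=
  Below le A B ∧ A ≠ B

/-- The bipartite poset induced by antichains `A` and `B` (with `A` below `B`)
is a core: `|A| = |B|` and every comparable pair `x ≤ y` with `x ∈ A`, `y ∈ B`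
is a Dilworth edge, i.e. belongs to a perfect matching of comparable pairs. -/
def IsCore {α : Type*} (le : α → α → Prop) (A B : Finset α) : Prop :=
  A.card = B.card ∧
    ∀ x ∈ A, ∀ y ∈ B, le x y →
      ∃ f : α → α, Set.BijOn f ↑A ↑B ∧ (∀ a ∈ A, le a (f a)) ∧ f x = y

/-- `A j = A_{s(i)}`: among the antichains presented before `A i`, it is the
`⊑`-least one strictly above `A i`. -/
def IsSuccIdx {α : Type*} (le : α → α → Prop) {n : ℕ} (A : Fin n → Finset α)
    (i j : Fin n) : Prop :=
  j < i ∧ StrictBelow le (A i) (A j) ∧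
    ∀ k : Fin n, k < i → StrictBelow le (A i) (A k) → Below le (A j) (A k)

/-- `A j = A_{p(i)}`: among the antichains presented before `A i`, it is the
`⊑`-greatest one strictly below `A i`. -/
def IsPredIdx {α : Type*} (le : α → α → Prop) {n : ℕ} (A : Fin n → Finset α)
    (i j : Fin n) : Prop :=
  j < i ∧ StrictBelow le (A j) (A i) ∧
    ∀ k : Fin n, k < i → StrictBelow le (A k) (A i) → Below le (A k) (A j)

/-- `(P, A_1, …, A_n)` is a regular poset of width `w`: the `A i` are pairwise
disjoint maximum antichains (each of size `w`, the width of `P`) covering `P`,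
linearly ordered by `⊑`; consecutive-at-presentation-time pairs induce cores
(R4); and every comparability with an earlier antichain factors through the
`⊑`-neighbors at presentation time (R5). -/
def IsRegularPoset {α : Type*} (le : α → α → Prop) (w : ℕ) {n : ℕ}
    (A : Fin n → Finset α) : Prop :=
  (∀ v : α, ∃ i, v ∈ A i) ∧
  (∀ i j : Fin n, i ≠ j → ∀ v ∈ A i, v ∉ A j) ∧
  (∀ i, IsAntichainOn le (A i)) ∧
  (∀ i, (A i).card = w) ∧
  IsWidth le w ∧
  (∀ i j : Fin n, Below le (A i) (A j) ∨ Below le (A j) (A i)) ∧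
  (∀ i j : Fin n, IsSuccIdx le A i j → IsCore le (A i) (A j)) ∧
  (∀ i j : Fin n, IsPredIdx le A i j → IsCore le (A j) (A i)) ∧
  (∀ (i j : Fin n) (x y : α), x ∈ A i → y ∈ A j → le x y → x ≠ y →
    (j < i → ∃ k, IsSuccIdx le A i k ∧ ∃ z ∈ A k, le x z ∧ x ≠ z ∧ le z y) ∧
    (i < j → ∃ k, IsPredIdx le A j k ∧ ∃ z ∈ A k, le x z ∧ le z y ∧ z ≠ y))

/-- `x` is an ascending chain: increasing both in the poset and in color. -/
def IsAscending {α : Type*} (le : α → α → Prop) (g : α → ℕ) {k : ℕ}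
    (x : Fin k → α) : Prop :=
  ∀ i j : Fin k, i < j → (le (x i) (x j) ∧ x i ≠ x j) ∧ g (x i) < g (x j)

/-- `x` is a descending chain: decreasing in the poset, increasing in color. -/
def IsDescending {α : Type*} (le : α → α → Prop) (g : α → ℕ) {k : ℕ}
    (x : Fin k → α) : Prop :=
  ∀ i j : Fin k, i < j → (le (x j) (x i) ∧ x i ≠ x j) ∧ g (x i) < g (x j)

/-- The order of the lexicographic product `P · Q`. -/
def LexLe {α β : Type*} (leP : α → α → Prop) (leQ : β → β → Prop) :
    α × β → α × β → Prop :=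
  fun a b => (leP a.1 b.1 ∧ a.1 ≠ b.1) ∨ (a.1 = b.1 ∧ leQ a.2 b.2)

/-!
The matchings between consecutive antichains compose. They partition a regular poset of width `w`
into `w` chains, the classes, and they exclude ladders with `m = 2 * w ^ 2 + 1` rungs.

Consider a family of points of distinct Grundy colors no two of which can be told apart by a point
outside a set `B` of classes. It contains, or its Grundy witnesses do, another such family for at
most half as many classes, smaller only by a factor polynomial in `w` and `m`. After `log₂ w` such
halvings at most one class is left, and the family is a single point.

To halve `B`, choose pivots one at a time: `p` lies in one class with two points `a < p ≤ b` of the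
family, and many more in `[a, p]` and `[p, b]`. Let `I` be one of these intervals.
If at most `#B / 2` classes meet `I`, use the chain of family points in `I`: as ladders are short,
each other class is cut in few ways by this chain. If instead witnesses of many colors at `p` are
incomparable to both ends of `I`, use a chain of these, which avoids all classes meeting `I`. When
neither happens for either interval, the remaining witnesses are incomparable to `p` and lie in
`[a, b]`, and the search continues among them. Later intervals avoid the classes of the earlier
pivots, so at most about `#B / 2` pivots are needed.
-/

open Finset

section Combinatorics

variable {α ι β : Type*}

theorem exists_rank_of_total [Finite ι] {r : ι → ι → Prop} (htotal : ∀ i j, r i j ∨ r j i)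
    (htrans : ∀ i j k, r i j → r j k → r i k) : ∃ ρ : ι → ℕ, ∀ i j, ρ i ≤ ρ j ↔ r i j := by
  classical
  have := Fintype.ofFinite ι
  refine ⟨fun i => #{l | r l i}, fun i j => ⟨fun hij => ?_, fun hij => ?_⟩⟩
  · by_contra hnot
    have hji : r j i := (htotal i j).resolve_left hnot
    refine hij.not_gt (card_lt_card ⟨fun l hl => ?_, fun hsub => hnot ?_⟩)
    · simpa using htrans l j i (by simpa using hl) hji
    · simpa using hsub (show i ∈ filter (fun l => r l i) univ by simpa using htotal i i)
  · exact card_le_card fun l hl => by simpa using htrans l i j (by simpa using hl) hij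

theorem exists_finset_injOn_image_eq [DecidableEq β] {g : α → β} {p : α → Prop} {T : Finset β}
    (h : ∀ i ∈ T, ∃ v, g v = i ∧ p v) :
    ∃ V : Finset α, Set.InjOn g V ∧ V.image g = T ∧ ∀ v ∈ V, p v := by
  obtain ⟨V, hV, hinj, himage⟩ := exists_subset_injOn_image_eq_of_surjOn (f := g) {v | p v} T
    fun i hi => let ⟨v, hv, hp⟩ := h i hi; ⟨v, hp, hv⟩
  exact ⟨V, hinj, himage, fun v hv => hV hv⟩

theorem exists_finset_injOn_forall_eq {κ : Type*} [Fintype κ] [Nonempty κ] (f : α → κ)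
    {g : α → β} {p : α → Prop} {T : Finset β} (h : ∀ i ∈ T, ∃ v, g v = i ∧ p v) {r : ℕ}
    (hr : Fintype.card κ * r ≤ #T) :
    ∃ V : Finset α, Set.InjOn g V ∧ r ≤ #V ∧ (∀ v ∈ V, g v ∈ T ∧ p v) ∧
      ∀ u ∈ V, ∀ v ∈ V, f u = f v := by
  classical
  obtain ⟨V, hinj, rfl, hV⟩ := exists_finset_injOn_image_eq h
  rw [card_image_of_injOn hinj] at hr
  obtain ⟨k, -, hk⟩ := exists_le_card_fiber_of_mul_le_card_of_maps_to (f := f) (s := V)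
    (fun v _ => mem_univ (f v)) univ_nonempty hr
  refine ⟨{v ∈ V | f v = k}, hinj.mono (filter_subset _ V), hk, fun v hv => ?_, ?_⟩
  · have hv := (mem_filter.1 hv).1
    exact ⟨mem_image_of_mem g hv, hV v hv⟩
  · exact fun u hu v hv => (mem_filter.1 hu).2.trans (mem_filter.1 hv).2.symm

theorem exists_subset_card_eq_forall_sdiff_lt [LinearOrder β] (T : Finset β) {r : ℕ}
    (hr : r ≤ #T) : ∃ T₁ ⊆ T, #T₁ = r ∧ ∀ i ∈ T \ T₁, ∀ j ∈ T₁, i < j := by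
  induction T using induction_on_min with
  | empty => exact ⟨∅, by simp_all⟩
  | insert a T ha ih =>
    have haT : a ∉ T := fun h => (ha a h).false
    rw [card_insert_of_notMem haT] at hr
    obtain hr | rfl := hr.lt_or_eq
    · obtain ⟨T₁, hT₁, hcard, hlt⟩ := ih (Nat.le_of_lt_succ hr)
      refine ⟨T₁, hT₁.trans (subset_insert a T), hcard, fun i hi j hj => ?_⟩
      obtain ⟨hi, hi₁⟩ := mem_sdiff.1 hi
      obtain rfl | hi := mem_insert.1 hi
      · exact ha j (hT₁ hj)
      · exact hlt i (mem_sdiff.2 ⟨hi, hi₁⟩) j hj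
    · exact ⟨insert a T, Subset.rfl, card_insert_of_notMem haT, by simp⟩

variable [PartialOrder α]

theorem exists_strictMono_range_eq_of_isChain {X : Finset α} (hX : IsChain (· ≤ ·) (X : Set α)) :
    ∃ e : Fin #X → α, StrictMono e ∧ Set.range e = X := by
  classical
  let := hX.linearOrder
  let e := monoEquivOfFin (X : Set α) (k := #X) (by simp)
  refine ⟨fun i => e i, fun i j hij => e.strictMono hij, ?_⟩
  rw [Set.range_comp' Subtype.val e, e.surjective.range_eq]
  simp

open scoped Classical in
theorem exists_lt_le_card_Icc_of_isChain {Y : Finset α} (hY : IsChain (· ≤ ·) (Y : Set α)) {q : ℕ}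
    (hq : 0 < q) (hcard : 2 * q ≤ #Y) :
    ∃ a ∈ Y, ∃ p ∈ Y, ∃ b ∈ Y, a < p ∧ p ≤ b ∧
      q ≤ #{y ∈ Y | y ∈ Set.Icc a p} ∧ q ≤ #{y ∈ Y | y ∈ Set.Icc p b} := by
  obtain ⟨e, he, hrange⟩ := exists_strictMono_range_eq_of_isChain hY
  have hmem (i) : e i ∈ Y := mem_coe.1 (hrange ▸ Set.mem_range_self i)
  have hIcc (i j : Fin #Y) : (j + 1 - i : ℕ) ≤ #{y ∈ Y | y ∈ Set.Icc (e i) (e j)} := by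
    rw [← Fin.card_Icc, ← card_image_of_injective _ he.injective]
    refine card_le_card fun y hy => ?_
    obtain ⟨k, hk, rfl⟩ := mem_image.1 hy
    rw [mem_Icc] at hk
    exact mem_filter.2 ⟨hmem k, he.monotone hk.1, he.monotone hk.2⟩
  have hfirst := hIcc ⟨0, by lia⟩ ⟨q, by lia⟩
  have hlast := hIcc ⟨q, by lia⟩ ⟨#Y - 1, by lia⟩
  refine ⟨_, hmem ⟨0, by lia⟩, _, hmem ⟨q, by lia⟩, _, hmem ⟨#Y - 1, by lia⟩, he ?_,
    he.monotone ?_, by lia, by lia⟩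
  · simpa [Fin.lt_def] using hq
  · simp only [Fin.le_def]
    lia

open scoped Classical in
-- The total number of values taken by the `f i` below `x` is monotone in `x` and takes few values;
-- where it is constant, so is every `f i`.
theorem exists_subset_forall_eq_of_monotone_or_antitone [PartialOrder β] {X : Finset α}
    (hX : IsChain (· ≤ ·) (X : Set α)) {I : Finset ι} {f : ι → α → β}
    (hf : ∀ i ∈ I, Monotone (f i) ∨ Antitone (f i)) {m s : ℕ}
    (hm : ∀ i ∈ I, #(X.image (f i)) ≤ m) (hs : (m * #I + 1) * s ≤ #X) :
    ∃ X' ⊆ X, s ≤ #X' ∧ ∀ i ∈ I, ∀ x ∈ X', ∀ y ∈ X', f i x = f i y := by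
  let values (i : ι) (x : α) : Finset β := {y ∈ X | y ≤ x}.image (f i)
  let ρ (x : α) : ℕ := ∑ i ∈ I, #(values i x)
  have hvalues (i : ι) {x y : α} (hxy : x ≤ y) : values i x ⊆ values i y :=
    image_subset_image (monotone_filter_right _ fun z _ hz => hz.trans hxy)
  have hρ : ∀ x ∈ X, ρ x ∈ range (m * #I + 1) := fun x _ => by
    rw [mem_range, Nat.lt_succ_iff, mul_comm, ← smul_eq_mul]
    exact sum_le_card_nsmul I _ m fun i hi =>
      (card_le_card (image_subset_image (filter_subset _ X))).trans (hm i hi)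
  obtain ⟨t, -, ht⟩ :=
    exists_le_card_fiber_of_mul_le_card_of_maps_to hρ (by simp) (by simpa using hs)
  have heq_of_le : ∀ i ∈ I, ∀ x, ∀ y ∈ X, ρ x = ρ y → x ≤ y → f i x = f i y := by
    intro i hi x y hy hxy hle
    have hcard : #(values i x) = #(values i y) :=
      (sum_eq_sum_iff_of_le fun i _ => card_le_card (hvalues i hle)).1 hxy i hi
    have hmem : f i y ∈ values i x := by
      rw [eq_of_subset_of_card_le (hvalues i hle) hcard.ge]
      exact mem_image_of_mem _ (mem_filter.2 ⟨hy, le_rfl⟩)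
    obtain ⟨z, hz, hzy⟩ := mem_image.1 hmem
    have hzx := (mem_filter.1 hz).2
    obtain hmono | hanti := hf i hi
    · exact (hmono hle).antisymm (hzy ▸ hmono hzx)
    · exact (hzy ▸ hanti hzx).antisymm (hanti hle)
  refine ⟨{x ∈ X | ρ x = t}, filter_subset _ _, ht, fun i hi x hx y hy => ?_⟩
  obtain ⟨hx, hxt⟩ := mem_filter.1 hx
  obtain ⟨hy, hyt⟩ := mem_filter.1 hy
  obtain hle | hle := hX.total hx hy
  · exact heq_of_le i hi x y hy (hxt.trans hyt.symm) hle
  · exact (heq_of_le i hi y x hx (hyt.trans hxt.symm) hle).symm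

end Combinatorics

section Matching

variable {α : Type*} [Preorder α] {A B C : Finset α} {f f' : α → α}

/-- `f` is a perfect matching between `A` and `B` all of whose edges `a ≤ f a` go upwards; the
edges of such matchings are the Dilworth edges of `IsCore`. -/
def IsUpMatching (A B : Finset α) (f : α → α) : Prop :=
  Set.BijOn f A B ∧ ∀ a ∈ A, a ≤ f a

namespace IsUpMatching

theorem refl (A : Finset α) : IsUpMatching A A id := ⟨Set.bijOn_id _, fun _ _ => le_rfl⟩

theorem comp (hf' : IsUpMatching B C f') (hf : IsUpMatching A B f) : IsUpMatching A C (f' ∘ f) :=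
  ⟨hf'.1.comp hf.1, fun a ha => (hf.2 a ha).trans (hf'.2 (f a) (hf.1.mapsTo ha))⟩

variable [DecidableLE α]

theorem mapsTo_filter_le (hf : IsUpMatching A B f) (y : α) :
    Set.MapsTo f (A.filter (y ≤ ·)) (B.filter (y ≤ ·)) := fun v hv => by
  obtain ⟨hv, hyv⟩ := mem_filter.1 hv
  exact mem_filter.2 ⟨hf.1.mapsTo hv, hyv.trans (hf.2 v hv)⟩

theorem injOn_filter_le (hf : IsUpMatching A B f) (y : α) : Set.InjOn f (A.filter (y ≤ ·)) :=
  hf.1.injOn.mono (coe_subset.2 (filter_subset _ A))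

theorem card_filter_le (hf : IsUpMatching A B f) (y : α) :
    #{v ∈ A | y ≤ v} ≤ #{v ∈ B | y ≤ v} :=
  card_le_card_of_injOn f (hf.mapsTo_filter_le y) (hf.injOn_filter_le y)

theorem le_of_le_apply (hf : IsUpMatching A B f) {v y : α} (hv : v ∈ A) (hy : y ≤ f v)
    (hcard : #{v ∈ B | y ≤ v} ≤ #{v ∈ A | y ≤ v}) : y ≤ v := by
  obtain ⟨u, hu, huv⟩ := surjOn_of_injOn_of_card_le f (hf.mapsTo_filter_le y)
    (hf.injOn_filter_le y) hcard (mem_filter.2 ⟨hf.1.mapsTo hv, hy⟩ : f v ∈ B.filter (y ≤ ·))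
  obtain ⟨hu, hyu⟩ := mem_filter.1 hu
  exact hf.1.injOn hu hv huv ▸ hyu

end IsUpMatching

-- The antichains are adjoined by increasing `h`, prolonging the chains along a matching.
theorem exists_chain_partition_of_isUpMatching {ι β : Type*} [Finite ι] [LinearOrder β]
    {A : ι → Finset α} {h : ι → β} (hinj : Function.Injective h) {w : ℕ} (hcard : ∀ i, #(A i) = w)
    (hmatch : ∀ i j, h i ≤ h j → ∃ f, IsUpMatching (A i) (A j) f) :
    ∃ e : ι → Fin w → α, (∀ i, Set.BijOn (e i) Set.univ (A i)) ∧
      ∀ i j, h i ≤ h j → ∀ k, e i k ≤ e j k := by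
  classical
  have := Fintype.ofFinite ι
  suffices ∀ S : Finset ι, ∃ e : ι → Fin w → α, (∀ i, Set.BijOn (e i) Set.univ (A i)) ∧
      ∀ i ∈ S, ∀ j ∈ S, h i ≤ h j → ∀ k, e i k ≤ e j k by simpa using this univ
  intro S
  induction S using induction_on_max_value h with
  | empty =>
    refine ⟨fun i k => (equivFinOfCardEq (hcard i)).symm k, fun i => ⟨by simp [Set.MapsTo], ?_, ?_⟩,
      by simp⟩
    · exact (Subtype.val_injective.comp (Equiv.injective _)).injOn
    · exact fun a ha => ⟨equivFinOfCardEq (hcard i) ⟨a, ha⟩, trivial, by simp⟩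
  | insert b S hb hmax ih =>
    obtain ⟨e, hbij, hle⟩ := ih
    obtain rfl | hS := S.eq_empty_or_nonempty
    · exact ⟨e, hbij, by simp⟩
    obtain ⟨t, ht, htmax⟩ := exists_max_image S h hS
    obtain ⟨f, hf⟩ := hmatch t b (hmax t ht)
    refine ⟨Function.update e b (f ∘ e t), fun i => ?_, fun i hi j hj hij k => ?_⟩
    · obtain rfl | hib := eq_or_ne i b
      · simpa using hf.1.comp (hbij t)
      · simpa [hib] using hbij i
    · have hne {l : ι} (hl : l ∈ S) : l ≠ b := ne_of_mem_of_not_mem hl hb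
      obtain rfl | hjS := mem_insert.1 hj <;> obtain rfl | hiS := mem_insert.1 hi
      · rfl
      · simpa [hne hiS] using
          (hle i hiS t ht (htmax i hiS) k).trans (hf.2 _ ((hbij t).mapsTo trivial))
      · exact absurd (hinj (hij.antisymm (hmax j hjS))) (hne hjS).symm
      · simpa [hne hiS, hne hjS] using hle i hiS j hjS hij k

end Matching

section Presentation

variable {α β : Type*} [LinearOrder β] {τ : α → ℕ} {ρ : α → β}

/-- The level of `e` is the first one presented between the levels of `x` and `y`. -/
def IsEarliest (τ : α → ℕ) (ρ : α → β) (x y e : α) : Prop :=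
  ρ e ∈ Set.Icc (ρ x) (ρ y) ∧ ∀ t, ρ t ∈ Set.Icc (ρ x) (ρ y) → τ e ≤ τ t

open OrderDual in
theorem IsEarliest.dual {x y e : α} (he : IsEarliest τ ρ x y e) :
    IsEarliest (τ ∘ ofDual) (toDual ∘ ρ ∘ ofDual) (toDual y) (toDual x) (toDual e) :=
  ⟨he.1.symm, fun t ht => he.2 (ofDual t) ht.symm⟩

variable [PartialOrder α]

/-- A poset presented level by level: `ρ` is the position of the level of a point from bottom to
top, `τ` the time at which that level is presented. Each comparability with an earlier level
factors through the nearest earlier level in its direction. -/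
structure IsPresentation (τ : α → ℕ) (ρ : α → β) : Prop where
  time_eq_iff : ∀ x y, τ x = τ y ↔ ρ x = ρ y
  monotone : Monotone ρ
  exists_succ : ∀ x y, x ≤ y → τ y < τ x →
    ∃ z ∈ Set.Icc x y, τ z < τ x ∧ ∀ t, τ t < τ x → ρ x ≤ ρ t → ρ z ≤ ρ t
  exists_pred : ∀ x y, x ≤ y → τ x < τ y →
    ∃ z ∈ Set.Icc x y, τ z < τ y ∧ ∀ t, τ t < τ y → ρ t ≤ ρ y → ρ t ≤ ρ z

theorem exists_isEarliest (τ : α → ℕ) (hρ : Monotone ρ) {x y : α} (hxy : x ≤ y) :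
    ∃ e, IsEarliest τ ρ x y e := by
  obtain ⟨e, he, hmin⟩ := exists_minimalFor_of_wellFoundedLT (fun t => ρ t ∈ Set.Icc (ρ x) (ρ y)) τ
    ⟨x, le_rfl, hρ hxy⟩
  exact ⟨e, he, fun t ht => (le_total (τ e) (τ t)).elim id (hmin ht)⟩

namespace IsPresentation

open OrderDual in
theorem dual (h : IsPresentation τ ρ) :
    IsPresentation (τ ∘ ofDual) (toDual ∘ ρ ∘ ofDual) where
  time_eq_iff x y := h.time_eq_iff (ofDual x) (ofDual y)
  monotone := h.monotone.dual
  exists_succ x y hxy hτ :=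
    let ⟨z, hz, hzt⟩ := h.exists_pred (ofDual y) (ofDual x) hxy hτ
    ⟨toDual z, hz.symm, hzt⟩
  exists_pred x y hxy hτ :=
    let ⟨z, hz, hzt⟩ := h.exists_succ (ofDual y) (ofDual x) hxy hτ
    ⟨toDual z, hz.symm, hzt⟩

-- Replace whichever of `u`, `v` is presented later by the point through which `v ≤ u` factors.
theorem exists_mem_Icc_rank_eq (h : IsPresentation τ ρ) {v u k : α} (hvu : v ≤ u)
    (hvk : ρ v ≤ ρ k) (hku : ρ k ≤ ρ u) (hu : ∀ t, ρ k ≤ ρ t → ρ t ≤ ρ u → τ k ≤ τ t)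
    (hv : τ v ≤ τ k ∨ ∀ t, ρ v ≤ ρ t → ρ t ≤ ρ k → τ k ≤ τ t) :
    ∃ z ∈ Set.Icc v u, ρ z = ρ k := by
  induction hs : τ v + τ u using Nat.strong_induction_on generalizing v u with
  | _ s ih =>
    subst hs
    obtain hvk' | hvk' := eq_or_ne (ρ v) (ρ k)
    · exact ⟨v, ⟨le_rfl, hvu⟩, hvk'⟩
    obtain hku' | hku' := eq_or_ne (ρ k) (ρ u)
    · exact ⟨u, ⟨hvu, le_rfl⟩, hku'.symm⟩
    have hτku : τ k < τ u := (hu u hku le_rfl).lt_of_ne (mt (h.time_eq_iff k u).1 hku')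
    obtain hτ | hτ | hτ := lt_trichotomy (τ v) (τ u)
    · obtain ⟨z, hz, hτz, hρz⟩ := h.exists_pred v u hvu hτ
      have hkz := hρz k hτku hku
      obtain ⟨z', hz', hρz'⟩ := ih _ (by lia) hz.1 hvk hkz
        (fun t hkt htz => hu t hkt (htz.trans (h.monotone hz.2))) hv rfl
      exact ⟨z', ⟨hz'.1, hz'.2.trans hz.2⟩, hρz'⟩
    · exact absurd (hvk.antisymm ((h.time_eq_iff v u).1 hτ ▸ hku)) hvk'
    · obtain ⟨z, hz, hτz, hρz⟩ := h.exists_succ v u hvu hτ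
      obtain ⟨z', hz', hρz'⟩ := ih _ (by lia) hz.2 (hρz k (hτku.trans hτ) hvk) hku hu
        (.inr fun t hzt => hv.resolve_left (by lia) t ((h.monotone hz.1).trans hzt)) rfl
      exact ⟨z', ⟨hz.1.trans hz'.1, hz'.2⟩, hρz'⟩

variable {ι : Type*} [LinearOrder ι] {x y : ι → α} {w : ℕ}

-- Let `r` maximize `ρ (e r)`. Each interval meets the level of `e i`, hence the level of `e r`,
-- and disjoint intervals meet it in different points.
theorem card_le_of_pierced_above (h : IsPresentation τ ρ)
    (hw : ∀ s : Finset α, (∀ a ∈ s, ∀ b ∈ s, ρ a = ρ b) → #s ≤ w)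
    (hx : Monotone x) (hy : Monotone y) (hxy : ∀ i, x i ≤ y i) {I : Finset ι}
    (hdisj : (I : Set ι).PairwiseDisjoint fun i => Set.Icc (x i) (y i)) {e : ι → α}
    (he : ∀ i ∈ I, IsEarliest τ ρ (x i) (y i) (e i)) {p : β}
    (hp : ∀ i ∈ I, ρ (e i) ≤ p ∧ p ≤ ρ (y i)) : #I ≤ w := by
  classical
  obtain rfl | hI := I.eq_empty_or_nonempty
  · simp
  obtain ⟨r, hr, hmax⟩ := exists_max_image I (fun i => ρ (e i)) hI
  have hmeet : ∀ i ∈ I, ∃ z ∈ Set.Icc (x i) (y i), ρ z = ρ (e r) := by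
    intro i hi
    have ⟨⟨hxe, hey⟩, hearly⟩ := he i hi
    have ⟨⟨hxer, heyr⟩, hearlyr⟩ := he r hr
    obtain ⟨z, hz, hρz⟩ := h.exists_mem_Icc_rank_eq (hxy i) hxe hey
      (fun t het hty => hearly t ⟨hxe.trans het, hty⟩)
      (.inr fun t hxt hte => hearly t ⟨hxt, hte.trans hey⟩)
    have hery : ρ (e r) ≤ ρ (y i) := (hp r hr).1.trans (hp i hi).2
    have hτ : τ (e i) ≤ τ (e r) := hearly (e r) ⟨hxe.trans (hmax i hi), hery⟩
    obtain hir | hri := le_total i r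
    · obtain ⟨z', hz', hρz'⟩ := h.exists_mem_Icc_rank_eq hz.2 (hρz ▸ hmax i hi) hery
        (fun t het hty => hearlyr t ⟨hxer.trans het, hty.trans (h.monotone (hy hir))⟩)
        (.inl (((h.time_eq_iff z (e i)).2 hρz).trans_le hτ))
      exact ⟨z', ⟨hz.1.trans hz'.1, hz'.2⟩, hρz'⟩
    · have hτ' : τ (e r) ≤ τ (e i) :=
        hearlyr (e i) ⟨(h.monotone (hx hri)).trans hxe, (hmax i hi).trans heyr⟩
      exact ⟨z, hz, hρz.trans ((h.time_eq_iff _ _).1 (hτ.antisymm hτ'))⟩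
  have : Nonempty α := ⟨x r⟩
  choose! z hz hρz using hmeet
  have hinj : Set.InjOn z I := fun i hi j hj hij => by
    by_contra hne
    exact Set.disjoint_left.1 (hdisj hi hj hne) (hz i hi) (hij ▸ hz j hj)
  rw [← card_image_of_injOn hinj]
  refine hw _ (forall_mem_image.2 fun i hi => forall_mem_image.2 fun j hj => ?_)
  exact (hρz i hi).trans (hρz j hj).symm

theorem card_le_of_pierced (h : IsPresentation τ ρ)
    (hw : ∀ s : Finset α, (∀ a ∈ s, ∀ b ∈ s, ρ a = ρ b) → #s ≤ w)
    (hx : Monotone x) (hy : Monotone y) (hxy : ∀ i, x i ≤ y i) {I : Finset ι}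
    (hdisj : (I : Set ι).PairwiseDisjoint fun i => Set.Icc (x i) (y i)) {p : β}
    (hp : ∀ i ∈ I, p ∈ Set.Icc (ρ (x i)) (ρ (y i))) : #I ≤ 2 * w := by
  choose e he using fun i => exists_isEarliest τ h.monotone (hxy i)
  have hbelow : #{i ∈ I | ρ (e i) ≤ p} ≤ w :=
    h.card_le_of_pierced_above hw hx hy hxy (hdisj.subset (coe_subset.2 (filter_subset _ I)))
      (fun i _ => he i) fun i hi => ⟨(mem_filter.1 hi).2, (hp i (mem_filter.1 hi).1).2⟩
  have habove : #{i ∈ I | ¬ ρ (e i) ≤ p} ≤ w :=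
    h.dual.card_le_of_pierced_above (ι := ιᵒᵈ) hw hy.dual hx.dual hxy
      (fun i hi j hj hij => Set.disjoint_left.2 fun z hzi hzj =>
        Set.disjoint_left.1 (hdisj (mem_filter.1 hi).1 (mem_filter.1 hj).1 hij) hzi.symm hzj.symm)
      (fun i _ => (he i).dual)
      fun i hi => ⟨(not_le.1 (mem_filter.1 hi).2).le, (hp i (mem_filter.1 hi).1).1⟩
  have := card_filter_add_card_filter_not (s := I) fun i => ρ (e i) ≤ p
  lia

end IsPresentation

end Presentation

/-- The classes of the coloring `c` are chains, i.e. `c` is a coloring of the incomparability graph;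
the colors may form any type. -/
def IsChainColoring {α ι : Type*} [LE α] (c : α → ι) : Prop := ∀ u v, c u = c v → u ≤ v ∨ v ≤ u

section Ladder

variable {α : Type*} [PartialOrder α] {m : ℕ} {x y : Fin m → α}

namespace IsLadderIn

theorem monotone_left (h : IsLadderIn (· ≤ ·) x y) : Monotone x :=
  monotone_iff_forall_lt.2 fun i j hij => (h.1 i j hij).1

theorem monotone_right (h : IsLadderIn (· ≤ ·) x y) : Monotone y :=
  monotone_iff_forall_lt.2 fun i j hij => (h.2.1 i j hij).1

theorem not_right_le_left (h : IsLadderIn (· ≤ ·) x y) {i j : Fin m} (hij : i ≤ j) :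
    ¬ y i ≤ x j := by
  obtain hij | rfl := hij.lt_or_eq
  · exact (h.2.2.2 i j hij).1
  · exact fun hyx => (h.2.2.1 i).2 ((h.2.2.1 i).1.antisymm hyx)

theorem pairwise_disjoint_Icc (h : IsLadderIn (· ≤ ·) x y) :
    Pairwise (Function.onFun Disjoint fun i => Set.Icc (x i) (y i)) := by
  refine (pairwise_disjoint_on _).2 fun i j hij => Set.disjoint_left.2 fun z hzi hzj => ?_
  exact (h.2.2.2 i j hij).2 (hzj.1.trans hzi.2)

open OrderDual in
theorem dual (h : IsLadderIn (· ≤ ·) x y) :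
    IsLadderIn (· ≤ ·) (toDual ∘ y ∘ Fin.rev) (toDual ∘ x ∘ Fin.rev) :=
  ⟨fun _ _ hij => (h.2.1 _ _ (Fin.rev_lt_rev.2 hij)).imp_right Ne.symm,
    fun _ _ hij => (h.1 _ _ (Fin.rev_lt_rev.2 hij)).imp_right Ne.symm,
    fun i => (h.2.2.1 i.rev).imp_right Ne.symm, fun _ _ hij => h.2.2.2 _ _ (Fin.rev_lt_rev.2 hij)⟩

end IsLadderIn

theorem LFree.dual (h : LFree (fun a b : α => a ≤ b) m) : LFree (fun a b : αᵒᵈ => a ≤ b) m :=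
  fun ⟨_, _, hxy⟩ => h ⟨_, _, hxy.dual⟩

end Ladder

theorem Below.trans {α : Type*} [Preorder α] {A B C : Finset α} (hAB : Below (· ≤ ·) A B)
    (hBC : Below (· ≤ ·) B C) : Below (· ≤ ·) A C := fun a ha =>
  let ⟨_, hb, hab⟩ := hAB a ha
  let ⟨c, hc, hbc⟩ := hBC _ hb
  ⟨c, hc, hab.trans hbc⟩

namespace IsRegularPoset

variable {α : Type*} [PartialOrder α] {w n : ℕ} {A : Fin n → Finset α}

theorem card_eq (H : IsRegularPoset (· ≤ ·) w A) (i : Fin n) : #(A i) = w := H.2.2.2.1 i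

theorem index_eq (H : IsRegularPoset (· ≤ ·) w A) {i j : Fin n} {v : α} (hi : v ∈ A i)
    (hj : v ∈ A j) : i = j :=
  by_contra fun hij => H.2.1 i j hij v hi hj

theorem eq_of_le (H : IsRegularPoset (· ≤ ·) w A) {i : Fin n} {x y : α} (hx : x ∈ A i)
    (hy : y ∈ A i) (hxy : x ≤ y) : x = y :=
  by_contra fun hne => (H.2.2.1 i x hx y hy hne).1 hxy

theorem below_total (H : IsRegularPoset (· ≤ ·) w A) (i j : Fin n) :
    Below (· ≤ ·) (A i) (A j) ∨ Below (· ≤ ·) (A j) (A i) := H.2.2.2.2.2.1 i j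

theorem index_eq_of_below_of_below (H : IsRegularPoset (· ≤ ·) w A) {i j : Fin n} {x : α}
    (hx : x ∈ A i) (hij : Below (· ≤ ·) (A i) (A j)) (hji : Below (· ≤ ·) (A j) (A i)) :
    i = j := by
  obtain ⟨y, hy, hxy⟩ := hij x hx
  obtain ⟨z, hz, hyz⟩ := hji y hy
  obtain rfl := H.eq_of_le hx hz (hxy.trans hyz)
  exact H.index_eq hx (hxy.antisymm hyz ▸ hy)

theorem below_of_le (H : IsRegularPoset (· ≤ ·) w A) {i j : Fin n} {x y : α} (hx : x ∈ A i)
    (hy : y ∈ A j) (hxy : x ≤ y) : Below (· ≤ ·) (A i) (A j) := by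
  refine (H.below_total i j).elim id fun hji => ?_
  obtain ⟨z, hz, hyz⟩ := hji y hy
  obtain rfl := H.eq_of_le hx hz (hxy.trans hyz)
  obtain rfl := H.index_eq hx (hxy.antisymm hyz ▸ hy)
  exact hji

theorem exists_succ (H : IsRegularPoset (· ≤ ·) w A) {i j : Fin n} {x y : α} (hx : x ∈ A i)
    (hy : y ∈ A j) (hxy : x ≤ y) (hji : j < i) :
    ∃ k, IsSuccIdx (· ≤ ·) A i k ∧ ∃ z ∈ A k, x ≤ z ∧ z ≤ y := by
  have hne : x ≠ y := fun h => hji.ne (H.index_eq (h ▸ hy) hx)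
  obtain ⟨k, hk, z, hz, hxz, -, hzy⟩ := (H.2.2.2.2.2.2.2.2 i j x y hx hy hxy hne).1 hji
  exact ⟨k, hk, z, hz, hxz, hzy⟩

theorem exists_pred (H : IsRegularPoset (· ≤ ·) w A) {i j : Fin n} {x y : α} (hx : x ∈ A i)
    (hy : y ∈ A j) (hxy : x ≤ y) (hij : i < j) :
    ∃ k, IsPredIdx (· ≤ ·) A j k ∧ ∃ z ∈ A k, x ≤ z ∧ z ≤ y := by
  have hne : x ≠ y := fun h => hij.ne (H.index_eq (h ▸ hx) hy)
  obtain ⟨k, hk, z, hz, hxz, hzy, -⟩ := (H.2.2.2.2.2.2.2.2 i j x y hx hy hxy hne).2 hij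
  exact ⟨k, hk, z, hz, hxz, hzy⟩

-- By (R5) the edge factors through earlier antichains, where (R4) provides the matchings.
theorem exists_isUpMatching_apply_eq (H : IsRegularPoset (· ≤ ·) w A) {i j : Fin n} {x y : α}
    (hx : x ∈ A i) (hy : y ∈ A j) (hxy : x ≤ y) :
    ∃ f, IsUpMatching (A i) (A j) f ∧ f x = y := by
  have ⟨_, _, _, _, _, _, hsucc, hpred, _⟩ := H
  induction hs : (i + j : ℕ) using Nat.strong_induction_on generalizing i j x y with
  | _ s ih =>
    subst hs
    obtain hij | rfl | hji := lt_trichotomy i j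
    · obtain ⟨k, hk, z, hz, hxz, hzy⟩ := H.exists_pred hx hy hxy hij
      obtain ⟨f, hf, rfl⟩ := ih (i + k) (Nat.add_lt_add_left hk.1 i) hx hz hxz rfl
      obtain ⟨f', hf', hle, rfl⟩ := (hpred j k hk).2 _ hz y hy hzy
      exact ⟨f' ∘ f, .comp ⟨hf', hle⟩ hf, rfl⟩
    · exact ⟨id, .refl _, H.eq_of_le hx hy hxy⟩
    · obtain ⟨k, hk, z, hz, hxz, hzy⟩ := H.exists_succ hx hy hxy hji
      obtain ⟨f', hf', hle, rfl⟩ := (hsucc i k hk).2 x hx z hz hxz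
      obtain ⟨f, hf, rfl⟩ := ih (k + j) (Nat.add_lt_add_right hk.1 j) hz hy hzy rfl
      exact ⟨f ∘ f', hf.comp ⟨hf', hle⟩, rfl⟩

theorem exists_isUpMatching (H : IsRegularPoset (· ≤ ·) w A) {i j : Fin n}
    (hij : Below (· ≤ ·) (A i) (A j)) : ∃ f, IsUpMatching (A i) (A j) f := by
  obtain hi | ⟨x, hx⟩ := (A i).eq_empty_or_nonempty
  · have hj : A j = ∅ := by rw [← card_eq_zero, H.card_eq, ← H.card_eq i, hi, card_empty]
    exact ⟨id, hi ▸ hj ▸ .refl ∅⟩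
  · obtain ⟨y, hy, hxy⟩ := hij x hx
    obtain ⟨f, hf, -⟩ := H.exists_isUpMatching_apply_eq hx hy hxy
    exact ⟨f, hf⟩

theorem exists_rank (H : IsRegularPoset (· ≤ ·) w A) :
    ∃ ρ : Fin n → ℕ, ∀ i j, ρ i ≤ ρ j ↔ Below (· ≤ ·) (A i) (A j) :=
  exists_rank_of_total H.below_total fun _ _ _ => Below.trans

theorem exists_isChainColoring (H : IsRegularPoset (· ≤ ·) w A) (hw : 0 < w) :
    ∃ c : α → Fin w, IsChainColoring c := by
  obtain ⟨ρ, hρ⟩ := H.exists_rank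
  choose lev hlev using H.1
  have hinj : Function.Injective ρ := fun i j hij => by
    obtain ⟨x, hx⟩ := card_pos.1 (hw.trans_eq (H.card_eq i).symm)
    exact H.index_eq_of_below_of_below hx ((hρ i j).1 hij.le) ((hρ j i).1 hij.ge)
  obtain ⟨e, hbij, hle⟩ := exists_chain_partition_of_isUpMatching hinj H.card_eq
    fun i j hij => H.exists_isUpMatching ((hρ i j).1 hij)
  choose c _ hc using fun v => (hbij (lev v)).surjOn (hlev v)
  refine ⟨c, fun u v huv => ?_⟩
  have hcv : e (lev v) (c u) = v := huv ▸ hc v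
  exact (le_total (ρ (lev u)) (ρ (lev v))).imp (fun h => by simpa [hc, hcv] using hle _ _ h (c u))
    fun h => by simpa [hc, hcv] using hle _ _ h (c u)

variable {lev : α → Fin n} {ρ : Fin n → ℕ}

theorem isPresentation (H : IsRegularPoset (· ≤ ·) w A) (hlev : ∀ v, v ∈ A (lev v))
    (hρ : ∀ i j, ρ i ≤ ρ j ↔ Below (· ≤ ·) (A i) (A j)) :
    IsPresentation (fun v => (lev v : ℕ)) (fun v => ρ (lev v)) where
  time_eq_iff x y := by
    refine ⟨fun h => congrArg ρ (Fin.ext h), fun h => congrArg Fin.val ?_⟩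
    exact H.index_eq_of_below_of_below (hlev x) ((hρ _ _).1 h.le) ((hρ _ _).1 h.ge)
  monotone x y hxy := (hρ _ _).2 (H.below_of_le (hlev x) (hlev y) hxy)
  exists_succ x y hxy hτ := by
    obtain ⟨k, hk, z, hz, hxz, hzy⟩ := H.exists_succ (hlev x) (hlev y) hxy hτ
    obtain rfl := H.index_eq (hlev z) hz
    refine ⟨z, ⟨hxz, hzy⟩, hk.1, fun t ht hxt => (hρ _ _).2 (hk.2.2 _ ht ⟨(hρ _ _).1 hxt, ?_⟩)⟩
    exact fun h => ht.ne' (congrArg Fin.val (H.index_eq (hlev x) (h ▸ hlev x)))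
  exists_pred x y hxy hτ := by
    obtain ⟨k, hk, z, hz, hxz, hzy⟩ := H.exists_pred (hlev x) (hlev y) hxy hτ
    obtain rfl := H.index_eq (hlev z) hz
    refine ⟨z, ⟨hxz, hzy⟩, hk.1, fun t ht hty => (hρ _ _).2 (hk.2.2 _ ht ⟨(hρ _ _).1 hty, ?_⟩)⟩
    exact fun h => ht.ne (congrArg Fin.val (H.index_eq (hlev t) (h ▸ hlev t)))

theorem card_le_of_forall_rank_eq (H : IsRegularPoset (· ≤ ·) w A) (hlev : ∀ v, v ∈ A (lev v))
    (hρ : ∀ i j, ρ i ≤ ρ j ↔ Below (· ≤ ·) (A i) (A j)) {s : Finset α}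
    (hs : ∀ a ∈ s, ∀ b ∈ s, ρ (lev a) = ρ (lev b)) : #s ≤ w := by
  obtain rfl | ⟨a, ha⟩ := s.eq_empty_or_nonempty
  · simp
  rw [← H.card_eq (lev a)]
  refine card_le_card fun b hb => ?_
  have h := hs a ha b hb
  rw [H.index_eq_of_below_of_below (hlev a) ((hρ _ _).1 h.le) ((hρ _ _).1 h.ge)]
  exact hlev b

/- Many `y i` have the same number of points above `y 0` in their antichain. If the antichain of the
first of them lay strictly below that of `x j`, these numbers would also agree for `x j` and `y j`,
forcing `y 0 ≤ x j`; hence it pierces all the corresponding intervals `[x j, y j]`. -/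
theorem lFree (H : IsRegularPoset (· ≤ ·) w A) :
    LFree (fun a b : α => a ≤ b) (2 * w ^ 2 + 1) := by
  classical
  rintro ⟨x, y, hladder⟩
  obtain ⟨ρ, hρ⟩ := H.exists_rank
  choose lev hlev using H.1
  have hpres := H.isPresentation hlev hρ
  let up (i : Fin n) : ℕ := #{v ∈ A i | y 0 ≤ v}
  have hup : ∀ j ∈ univ, up (lev (y j)) ∈ Icc 1 w := fun j _ => mem_Icc.2
    ⟨card_pos.2 ⟨y j, mem_filter.2 ⟨hlev _, hladder.monotone_right (Fin.zero_le j)⟩⟩,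
      (card_filter_le _ _).trans_eq (H.card_eq _)⟩
  obtain ⟨t, -, ht⟩ := exists_lt_card_fiber_of_mul_lt_card_of_maps_to (n := 2 * w) hup
    (by simp only [Nat.card_Icc, card_univ, Fintype.card_fin]; lia)
  obtain ⟨i, hi, hmin⟩ := exists_minimal (card_pos.1 (Nat.zero_lt_of_lt ht))
  have hti : up (lev (y i)) = t := (mem_filter.1 hi).2
  refine ht.not_ge (hpres.card_le_of_pierced
    (fun s hs => H.card_le_of_forall_rank_eq hlev hρ hs)
    hladder.monotone_left hladder.monotone_right (fun i => (hladder.2.2.1 i).1)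
    (hladder.pairwise_disjoint_Icc.set_pairwise _)
    (p := ρ (lev (y i))) fun j hj => ⟨?_, ?_⟩)
  · by_contra! hlt
    obtain ⟨f, hf⟩ := H.exists_isUpMatching ((hρ _ _).1 hlt.le)
    obtain ⟨f', hf', hxy⟩ :=
      H.exists_isUpMatching_apply_eq (hlev (x j)) (hlev (y j)) (hladder.2.2.1 j).1
    have hcard : up (lev (y j)) ≤ up (lev (x j)) :=
      ((mem_filter.1 hj).2.trans hti.symm).le.trans (hf.card_filter_le (y 0))
    exact hladder.not_right_le_left (Fin.zero_le j) (hf'.le_of_le_apply (hlev (x j))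
      (hxy.symm ▸ hladder.monotone_right (Fin.zero_le j)) hcard)
  · exact hpres.monotone (hladder.monotone_right ((le_total i j).elim id (hmin hj)))

end IsRegularPoset

section Twins

variable {α ι : Type*} [PartialOrder α] {c : α → ι} {g : α → ℕ} {B : Finset ι}

/-- `u` and `v` compare in the same way to every point whose class lies outside `B`. -/
def Twins (c : α → ι) (B : Finset ι) (u v : α) : Prop :=
  ∀ d, c d ∉ B → ((d ≤ u ↔ d ≤ v) ∧ (u ≤ d ↔ v ≤ d))

namespace Twins

variable {u v x a b : α}

theorem symm (h : Twins c B u v) : Twins c B v u := fun d hd =>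
  ⟨(h d hd).1.symm, (h d hd).2.symm⟩

theorem trans (huv : Twins c B u v) (hvx : Twins c B v x) : Twins c B u x := fun d hd =>
  ⟨(huv d hd).1.trans (hvx d hd).1, (huv d hd).2.trans (hvx d hd).2⟩

theorem of_mem_Icc (ha : Twins c B a u) (hb : Twins c B b u) (hv : v ∈ Set.Icc a b) :
    Twins c B v u := fun d hd =>
  ⟨⟨fun h => (hb d hd).1.1 (h.trans hv.2), fun h => ((ha d hd).1.2 h).trans hv.1⟩,
    ⟨fun h => (ha d hd).2.1 (hv.1.trans h), fun h => hv.2.trans ((hb d hd).2.2 h)⟩⟩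

theorem eq_of_notMem (h : Twins c B u v) (hv : c v ∉ B) : u = v :=
  ((h v hv).2.2 le_rfl).antisymm ((h v hv).1.2 le_rfl)

end Twins

/-- `U` is a set of points with distinct `g`-colors which no point outside the classes in `B` can
tell apart; the recursion shrinks `B`. -/
def IsHomogeneous (c : α → ι) (g : α → ℕ) (B : Finset ι) (U : Finset α) : Prop :=
  Set.InjOn g U ∧ ∀ u ∈ U, ∀ v ∈ U, Twins c B u v

theorem IsGrundy.isChainColoring {N : ℕ} (hg : IsGrundy (fun a b : α => a ≤ b) N g) :
    IsChainColoring g := hg.2.2.1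

theorem IsGrundy.exists_incompRel {N : ℕ} (hg : IsGrundy (fun a b : α => a ≤ b) N g) {u v : α}
    (huv : g u < g v) : ∃ z, g z = g u ∧ IncompRel (· ≤ ·) z v :=
  let ⟨z, hz, hgz⟩ := hg.2.2.2 v (g u) (hg.1 u).1 huv
  ⟨z, hgz, hz⟩

-- The witness for `g u` at `v` would lie in the class of `v`.
theorem IsHomogeneous.card_le_one {N : ℕ} (hg : IsGrundy (fun a b : α => a ≤ b) N g)
    (hc : IsChainColoring c) {U : Finset α} (hU : IsHomogeneous c g B U) (hB : #B ≤ 1) :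
    #U ≤ 1 := by
  have hnot_lt : ∀ u ∈ U, ∀ v ∈ U, ¬ g u < g v := by
    intro u hu v hv huv
    have htwins := hU.2 u hu v hv
    have hvB : c v ∈ B := by
      by_contra hvB
      exact huv.ne (congrArg g (htwins.eq_of_notMem hvB))
    obtain ⟨z, hgz, hz⟩ := hg.exists_incompRel huv
    have hzB : c z ∈ B := by
      by_contra hzB
      exact (hg.isChainColoring z u hgz).elim (fun h => hz.1 ((htwins z hzB).1.1 h))
        fun h => hz.2 ((htwins z hzB).2.1 h)
    exact (hc z v (Finset.card_le_one.1 hB _ hzB _ hvB)).elim hz.1 hz.2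
  exact Finset.card_le_one.2 fun u hu v hv =>
    hU.1 hu hv ((not_lt.1 (hnot_lt v hv u hu)).antisymm (not_lt.1 (hnot_lt u hu v hv)))

end Twins

section Compression

variable {α : Type*} [PartialOrder α] {w m : ℕ}

open scoped Classical in
-- Consecutive points `x < z` of `X` with different traces yield a rung: `z` and a point of `C`
-- which is below `z` but not below `x`.
theorem card_image_inter_Iic_le (hm : LFree (fun a b : α => a ≤ b) m) {C : Set α}
    (hC : IsChain (· ≤ ·) C) {X : Finset α} (hX : IsChain (· ≤ ·) (X : Set α))
    (hdisj : ∀ x ∈ X, ∀ y ∈ X, Disjoint C (Set.Icc x y)) :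
    #(X.image fun x => C ∩ Set.Iic x) ≤ m := by
  by_contra! hlt
  obtain ⟨X', hinj, himage, hX'⟩ :=
    exists_finset_injOn_image_eq (g := fun x => C ∩ Set.Iic x) (p := (· ∈ X))
      fun _ hi => (mem_image.1 hi).imp fun _ => And.symm
  rw [← himage, card_image_of_injOn hinj] at hlt
  obtain ⟨e, he, hrange⟩ := exists_strictMono_range_eq_of_isChain (hX.mono hX')
  have hmem (i) : e i ∈ X' := mem_coe.1 (hrange ▸ Set.mem_range_self i)
  let lower (i : Fin m) : α := e ⟨i, by lia⟩
  let upper (i : Fin m) : α := e ⟨i + 1, by lia⟩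
  have hlu (i : Fin m) : lower i < upper i := he (Nat.lt_succ_self i)
  have hul {i j : Fin m} (hij : i < j) : upper i ≤ lower j := he.monotone (Nat.succ_le_of_lt hij)
  have hrung (i : Fin m) : ∃ d ∈ C, d ≤ upper i ∧ ¬ d ≤ lower i := by
    by_contra! h
    refine (hlu i).ne (hinj (hmem _) (hmem _) (Set.Subset.antisymm ?_ fun d hd => ?_))
    · exact Set.inter_subset_inter_right C (Set.Iic_subset_Iic.2 (hlu i).le)
    · exact ⟨hd.1, h d hd.1 hd.2⟩
  choose d hdC hdu hdl using hrung
  have hnot_upper_le (i j : Fin m) : ¬ upper i ≤ d j := fun h =>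
    Set.disjoint_left.1 (hdisj _ (hX' _ (hmem _)) _ (hX' _ (hmem _))) (hdC j) ⟨h, hdu j⟩
  have hnot_le_upper {i j : Fin m} (hij : i < j) : ¬ d j ≤ upper i := fun h =>
    hdl j (h.trans (hul hij))
  refine hm ⟨d, upper, fun i j hij => ?_, fun i j hij => ?_, fun i => ?_, fun i j hij => ?_⟩
  · have hji : ¬ d j ≤ d i := fun h => hnot_le_upper hij (h.trans (hdu i))
    exact ⟨(hC.total (hdC i) (hdC j)).resolve_right hji, fun h => hji h.ge⟩
  · have hlt := (hul hij).trans_lt (hlu j)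
    exact ⟨hlt.le, hlt.ne⟩
  · exact ⟨hdu i, fun h => hnot_upper_le i i h.ge⟩
  · exact ⟨hnot_upper_le i j, hnot_le_upper hij⟩

open scoped Classical in
theorem card_image_inter_Ici_le (hm : LFree (fun a b : α => a ≤ b) m) {C : Set α}
    (hC : IsChain (· ≤ ·) C) {X : Finset α} (hX : IsChain (· ≤ ·) (X : Set α))
    (hdisj : ∀ x ∈ X, ∀ y ∈ X, Disjoint C (Set.Icc x y)) :
    #(X.image fun x => C ∩ Set.Ici x) ≤ m :=
  card_image_inter_Iic_le (α := αᵒᵈ) hm.dual hC.symm hX.symm fun x hx y hy =>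
    (hdisj y hy x hx).mono_right fun _ hz => hz.symm

theorem IsChainColoring.isChain_preimage {ι : Type*} {c : α → ι} (hc : IsChainColoring c) (k : ι) :
    IsChain (· ≤ ·) (c ⁻¹' {k}) :=
  fun u hu v hv _ => hc u v (hu.trans hv.symm)

theorem exists_subset_forall_twins (hm : LFree (fun a b : α => a ≤ b) m) {c : α → Fin w}
    (hc : IsChainColoring c) {B : Finset (Fin w)} {X : Finset α}
    (hX : IsChain (· ≤ ·) (X : Set α)) (hXB : ∀ x ∈ X, ∀ y ∈ X, ∀ d ∈ Set.Icc x y, c d ∈ B)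
    {s : ℕ} (hs : (2 * m * w + 1) * s ≤ #X) :
    ∃ X' ⊆ X, s ≤ #X' ∧ ∀ x ∈ X', ∀ y ∈ X', Twins c B x y := by
  classical
  let trace : Fin w ⊕ Fin w → α → Set α :=
    Sum.elim (fun k x => c ⁻¹' {k} ∩ Set.Iic x) (fun k x => c ⁻¹' {k} ∩ Set.Ici x)
  have hmono : ∀ i ∈ Bᶜ.disjSum Bᶜ, Monotone (trace i) ∨ Antitone (trace i) := by
    rintro (k | k) -
    · exact .inl fun x y hxy => Set.inter_subset_inter_right _ (Set.Iic_subset_Iic.2 hxy)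
    · exact .inr fun x y hxy => Set.inter_subset_inter_right _ (Set.Ici_subset_Ici.2 hxy)
  have hdisj {k} (hk : k ∈ Bᶜ) : ∀ x ∈ X, ∀ y ∈ X, Disjoint (c ⁻¹' {k}) (Set.Icc x y) :=
    fun x hx y hy => Set.disjoint_left.2 fun d hd hxdy =>
      mem_compl.1 hk (hd ▸ hXB x hx y hy d hxdy)
  have hfew : ∀ i ∈ Bᶜ.disjSum Bᶜ, #(X.image (trace i)) ≤ m := by
    rintro (k | k) hk
    · exact card_image_inter_Iic_le hm (hc.isChain_preimage k) hX (hdisj (inl_mem_disjSum.1 hk))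
    · exact card_image_inter_Ici_le hm (hc.isChain_preimage k) hX (hdisj (inr_mem_disjSum.1 hk))
  have hcard : m * #(Bᶜ.disjSum Bᶜ) ≤ 2 * m * w := by
    have := card_finset_fin_le Bᶜ
    rw [card_disjSum]
    nlinarith
  obtain ⟨X', hX', hs', heq⟩ := exists_subset_forall_eq_of_monotone_or_antitone hX hmono hfew
    ((Nat.mul_le_mul_right s (Nat.succ_le_succ hcard)).trans hs)
  refine ⟨X', hX', hs', fun x hx y hy d hd => ⟨?_, ?_⟩⟩
  · have := Set.ext_iff.1
      (heq (.inl (c d)) (inl_mem_disjSum.2 (mem_compl.2 hd)) x hx y hy) d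
    simpa [trace] using this
  · have := Set.ext_iff.1
      (heq (.inr (c d)) (inr_mem_disjSum.2 (mem_compl.2 hd)) x hx y hy) d
    simpa [trace] using this

end Compression

section Halving

variable {α : Type*} [PartialOrder α] {w m N s : ℕ} {c : α → Fin w} {g : α → ℕ}
  {B : Finset (Fin w)} {a b u₀ v : α} {P : Finset α} {T : Finset ℕ}

/-- One step of the recursion: there is a homogeneous set of at least `s` points for at most half
as many classes as `B` has. -/
def HasHalving (c : α → Fin w) (g : α → ℕ) (B : Finset (Fin w)) (s : ℕ) : Prop :=
  ∃ B' U', IsHomogeneous c g B' U' ∧ 2 * #B' ≤ #B ∧ s ≤ #U'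

open scoped Classical in
/-- The classes of `c` which meet the interval `[a, b]`. -/
noncomputable def classesBetween (c : α → Fin w) (a b : α) : Finset (Fin w) :=
  {k | ∃ d ∈ Set.Icc a b, c d = k}

open scoped Classical in
/-- The colors in `T` taken by some point incomparable to both `a` and `b`. -/
noncomputable def colorsBeside (g : α → ℕ) (T : Finset ℕ) (a b : α) : Finset ℕ :=
  {i ∈ T | ∃ z, g z = i ∧ IncompRel (· ≤ ·) z a ∧ IncompRel (· ≤ ·) z b}

theorem mem_classesBetween {k : Fin w} :
    k ∈ classesBetween c a b ↔ ∃ d ∈ Set.Icc a b, c d = k := by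
  simp [classesBetween]

theorem mem_colorsBeside {i : ℕ} : i ∈ colorsBeside g T a b ↔
    i ∈ T ∧ ∃ z, g z = i ∧ IncompRel (· ≤ ·) z a ∧ IncompRel (· ≤ ·) z b := by
  simp [colorsBeside]

theorem HasHalving.of_isChain (hm : LFree (fun a b : α => a ≤ b) m) (hc : IsChainColoring c)
    {B' : Finset (Fin w)} {X : Finset α} (hX : IsChain (· ≤ ·) (X : Set α))
    (hg : Set.InjOn g X) (hXB : ∀ x ∈ X, ∀ y ∈ X, ∀ d ∈ Set.Icc x y, c d ∈ B')
    (hB : 2 * #B' ≤ #B) (hs : (2 * m * w + 1) * s ≤ #X) : HasHalving c g B s := by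
  obtain ⟨X', hX', hs', htwins⟩ := exists_subset_forall_twins hm hc hX hXB hs
  exact ⟨B', X', ⟨hg.mono hX', htwins⟩, hB, hs'⟩

open scoped Classical in
theorem HasHalving.of_card_classesBetween_le (hm : LFree (fun a b : α => a ≤ b) m)
    (hc : IsChainColoring c) {Y : Finset α} (hY : IsChain (· ≤ ·) (Y : Set α))
    (hg : Set.InjOn g Y) (hB : 2 * #(classesBetween c a b) ≤ #B)
    (hs : (2 * m * w + 1) * s ≤ #{y ∈ Y | y ∈ Set.Icc a b}) : HasHalving c g B s := by
  have hsub : (({y ∈ Y | y ∈ Set.Icc a b} : Finset α) : Set α) ⊆ Y := filter_subset _ Y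
  refine .of_isChain hm hc (hY.mono hsub) (hg.mono hsub) (fun x hx y hy d hd => ?_) hB hs
  exact mem_classesBetween.2
    ⟨d, ⟨(mem_filter.1 hx).2.1.trans hd.1, hd.2.trans (mem_filter.1 hy).2.2⟩, rfl⟩

theorem notMem_classesBetween (hc : IsChainColoring c) (hv : ¬ v ≤ b) (hv' : ¬ a ≤ v) :
    c v ∉ classesBetween c a b := fun h => by
  obtain ⟨d, hd, hdv⟩ := mem_classesBetween.1 h
  exact (hc d v hdv).elim (fun h => hv' (hd.1.trans h)) fun h => hv (h.trans hd.2)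

-- A point `v` of each color in `T` is a twin of `a`, so only points of the classes in `B` can lie
-- between two points which are beside `a` and `b` and on the same side of such points `v`.
theorem HasHalving.of_le_card_colorsBeside (hm : LFree (fun a b : α => a ≤ b) m)
    (hc : IsChainColoring c) (hg : IsChainColoring g) (hT : ∀ i ∈ T, ∃ v, g v = i ∧ Twins c B v a)
    (hsub : classesBetween c a b ⊆ B) (hB : #B ≤ 2 * #(classesBetween c a b))
    (hs : 2 * w * ((2 * m * w + 1) * s) ≤ #(colorsBeside g T a b)) : HasHalving c g B s := by
  have : Nonempty (Fin w) := ⟨c a⟩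
  have hbeside : ∀ i ∈ colorsBeside g T a b, ∃ z, g z = i ∧ (IncompRel (· ≤ ·) z a ∧
      IncompRel (· ≤ ·) z b ∧ ∃ v, Twins c B v a ∧ (z ≤ v ∨ v ≤ z)) := by
    intro i hi
    obtain ⟨hi, z, hgz, hza, hzb⟩ := mem_colorsBeside.1 hi
    obtain ⟨v, hgv, hv⟩ := hT i hi
    exact ⟨z, hgz, hza, hzb, v, hv, hg z v (hgz.trans hgv.symm)⟩
  obtain ⟨Z, hinj, hcard, hZ, heq⟩ := exists_finset_injOn_forall_eq
    (fun z => (∃ v, Twins c B v a ∧ z ≤ v, c z)) hbeside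
    (r := (2 * m * w + 1) * s) (by simpa using hs)
  refine .of_isChain (B' := B \ classesBetween c a b) hm hc
    (fun x hx y hy _ => hc x y (congrArg Prod.snd (heq x hx y hy))) hinj
    (fun x hx y hy d hd => mem_sdiff.2 ⟨?_, ?_⟩) ?_ hcard
  · obtain ⟨-, hxa, -, v, hv, hxv⟩ := hZ x hx
    obtain ⟨-, hya, -⟩ := hZ y hy
    have hside : (∃ v, Twins c B v a ∧ x ≤ v) ↔ ∃ v, Twins c B v a ∧ y ≤ v :=
      (congrArg Prod.fst (heq x hx y hy)).to_iff
    by_contra hdB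
    by_cases hbelow : ∃ v, Twins c B v a ∧ x ≤ v
    · obtain ⟨v, hv, hyv⟩ := hside.1 hbelow
      exact hxa.1 (hd.1.trans ((hv d hdB).1.1 (hd.2.trans hyv)))
    · have hvx : v ≤ x := hxv.resolve_left fun h => hbelow ⟨v, hv, h⟩
      exact hya.2 (((hv d hdB).2.1 (hvx.trans hd.1)).trans hd.2)
  · obtain ⟨-, -, hxb, -⟩ := hZ x hx
    obtain ⟨-, hya, -⟩ := hZ y hy
    exact notMem_classesBetween hc (fun h => hxb.1 (hd.1.trans h)) fun h => hya.2 (h.trans hd.2)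
  · rw [card_sdiff_of_subset hsub]
    lia

/-- `v` is a twin of `u₀` incomparable to all points of `P`. -/
def IsFree (c : α → Fin w) (B : Finset (Fin w)) (u₀ : α) (P : Finset α) (v : α) : Prop :=
  Twins c B v u₀ ∧ ∀ p ∈ P, IncompRel (· ≤ ·) v p

/-- The state of the search for a halving: the pivots `P` represent distinct classes in `B`, and
each of the colors in `T` is taken by a free point. Pivots are added until a halving shows up. -/
structure IsPivotSystem (c : α → Fin w) (g : α → ℕ) (B : Finset (Fin w)) (u₀ : α) (P : Finset α)
    (T : Finset ℕ) : Prop where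
  injOn : Set.InjOn c P
  color_mem : ∀ p ∈ P, c p ∈ B
  exists_free : ∀ i ∈ T, ∃ v, g v = i ∧ IsFree c B u₀ P v

namespace IsFree

theorem of_mem_Icc (ha : IsFree c B u₀ P a) (hb : IsFree c B u₀ P b) (hv : v ∈ Set.Icc a b) :
    IsFree c B u₀ P v :=
  ⟨ha.1.of_mem_Icc hb.1 hv, fun p hp =>
    ⟨fun h => (ha.2 p hp).1 (hv.1.trans h), fun h => (hb.2 p hp).2 (h.trans hv.2)⟩⟩

theorem notMem_image (hc : IsChainColoring c) (hv : IsFree c B u₀ P v) : c v ∉ P.image c := by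
  intro h
  obtain ⟨p, hp, hpv⟩ := mem_image.1 h
  exact (hc p v hpv).elim (hv.2 p hp).2 (hv.2 p hp).1

theorem classesBetween_subset (hc : IsChainColoring c) (ha : IsFree c B u₀ P a)
    (hb : IsFree c B u₀ P b) (haB : c a ∈ B) : classesBetween c a b ⊆ B \ P.image c := by
  intro k hk
  obtain ⟨d, hd, rfl⟩ := mem_classesBetween.1 hk
  have hfree := ha.of_mem_Icc hb hd
  refine mem_sdiff.2 ⟨?_, hfree.notMem_image hc⟩
  by_contra hdB
  exact hdB ((ha.1.trans hfree.1.symm).eq_of_notMem hdB ▸ haB)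

end IsFree

namespace IsPivotSystem

theorem mono (hP : IsPivotSystem c g B u₀ P T) {T' : Finset ℕ} (hT : T' ⊆ T) :
    IsPivotSystem c g B u₀ P T' :=
  ⟨hP.injOn, hP.color_mem, fun i hi => hP.exists_free i (hT hi)⟩

open scoped Classical in
theorem card_lt_of_not_hasHalving (hm : LFree (fun a b : α => a ≤ b) m) (hc : IsChainColoring c)
    (hg : IsChainColoring g) (hP : IsPivotSystem c g B u₀ P T) (hno : ¬ HasHalving c g B s)
    (ha : IsFree c B u₀ P a) (hb : IsFree c B u₀ P b) (haB : c a ∈ B) {Y : Finset α}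
    (hY : IsChain (· ≤ ·) (Y : Set α)) (hgY : Set.InjOn g Y)
    (hs : (2 * m * w + 1) * s ≤ #{y ∈ Y | y ∈ Set.Icc a b}) :
    2 * #P < #B ∧ #(colorsBeside g T a b) < 2 * w * ((2 * m * w + 1) * s) := by
  have hsub := ha.classesBetween_subset hc hb haB
  have hlt : #B < 2 * #(classesBetween c a b) :=
    not_le.1 fun h => hno (.of_card_classesBetween_le hm hc hY hgY h hs)
  have hle : #(classesBetween c a b) ≤ #B - #P := by
    have hPB : P.image c ⊆ B := image_subset_iff.2 hP.color_mem
    simpa [card_sdiff_of_subset hPB, card_image_of_injOn hP.injOn] using card_le_card hsub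
  refine ⟨by lia, not_le.1 fun h => hno ?_⟩
  refine .of_le_card_colorsBeside hm hc hg (fun i hi => ?_) (hsub.trans sdiff_subset) hlt.le h
  obtain ⟨v, hgv, hv⟩ := hP.exists_free i hi
  exact ⟨v, hgv, hv.1.trans ha.1.symm⟩

-- The Grundy witness at `p` of each remaining color lies between `a` and `b`, so it is free.
theorem insert_pivot [DecidableEq α] (hc : IsChainColoring c)
    (hg : IsGrundy (fun a b : α => a ≤ b) N g) (hP : IsPivotSystem c g B u₀ P T)
    (ha : IsFree c B u₀ P a) (hb : IsFree c B u₀ P b) {p : α} (hap : a ≤ p) (hpb : p ≤ b)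
    (hpB : c p ∈ B) (hT : ∀ i ∈ T, i < g p) :
    IsPivotSystem c g B u₀ (insert p P) (T \ (colorsBeside g T a p ∪ colorsBeside g T p b)) where
  injOn := by
    have hp := (ha.of_mem_Icc hb ⟨hap, hpb⟩).notMem_image hc
    rw [coe_insert, Set.injOn_insert fun h => hp (mem_image_of_mem c h)]
    exact ⟨hP.injOn, fun h => hp (by simpa using h)⟩
  color_mem := (forall_mem_insert _ _ _).2 ⟨hpB, hP.color_mem⟩
  exists_free i hi := by
    obtain ⟨hi, hbeside⟩ := mem_sdiff.1 hi
    rw [mem_union, not_or, mem_colorsBeside, mem_colorsBeside] at hbeside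
    obtain ⟨v, rfl, -⟩ := hP.exists_free i hi
    obtain ⟨z, hgz, hz⟩ := hg.exists_incompRel (hT _ hi)
    have haz : a ≤ z := by
      by_contra haz
      exact hbeside.1 ⟨hi, z, hgz, ⟨fun h => hz.1 (h.trans hap), haz⟩, hz⟩
    have hzb : z ≤ b := by
      by_contra hzb
      exact hbeside.2 ⟨hi, z, hgz, hz, ⟨hzb, fun h => hz.2 (hpb.trans h)⟩⟩
    have hfree := ha.of_mem_Icc hb ⟨haz, hzb⟩
    exact ⟨z, hgz, hfree.1, (forall_mem_insert _ _ _).2 ⟨hz, hfree.2⟩⟩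

-- The `2 * w * q` largest colors of `T`, for `q := (2 * m * w + 1) * s`, yield free points
-- `a < p ≤ b` of one class, with `q` of the free points of that class in each of the intervals
-- `[a, p]` and `[p, b]`.
theorem exists_card_succ_of_not_hasHalving (hm : LFree (fun a b : α => a ≤ b) m)
    (hc : IsChainColoring c) (hg : IsGrundy (fun a b : α => a ≤ b) N g)
    (hP : IsPivotSystem c g B u₀ P T) (hs : 0 < s) (hT : 2 * w * ((2 * m * w + 1) * s) ≤ #T)
    (hno : ¬ HasHalving c g B s) :
    2 * #P < #B ∧ ∃ P' T', IsPivotSystem c g B u₀ P' T' ∧ #P' = #P + 1 ∧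
      #T ≤ #T' + 6 * w * ((2 * m * w + 1) * s) := by
  classical
  have : Nonempty (Fin w) := ⟨c u₀⟩
  obtain ⟨T₁, hT₁, hcard, hlt⟩ := exists_subset_card_eq_forall_sdiff_lt T hT
  obtain ⟨Y, hgY, hYcard, hYfree, hYc⟩ := exists_finset_injOn_forall_eq c
    (fun i hi => hP.exists_free i (hT₁ hi)) (r := 2 * ((2 * m * w + 1) * s))
    (by rw [Fintype.card_fin, hcard, mul_left_comm, ← mul_assoc])
  have hY : IsChain (· ≤ ·) (Y : Set α) := fun x hx y hy _ => hc x y (hYc x hx y hy)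
  obtain ⟨a, ha, p, hp, b, hb, hap, hpb, hacard, hbcard⟩ :=
    exists_lt_le_card_Icc_of_isChain hY (by positivity) hYcard
  have hfa := (hYfree a ha).2
  obtain ⟨hgp, hfp⟩ := hYfree p hp
  have hfb := (hYfree b hb).2
  have hpB : c p ∈ B := by
    by_contra hpB
    exact hap.ne ((hfa.1.trans hfp.1.symm).eq_of_notMem hpB)
  have hP₀ := hP.mono (sdiff_subset : T \ T₁ ⊆ T)
  obtain ⟨hPB, hbeside⟩ := hP₀.card_lt_of_not_hasHalving hm hc hg.isChainColoring hno hfa hfp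
    (hYc p hp a ha ▸ hpB) hY hgY hacard
  obtain ⟨-, hbeside'⟩ := hP₀.card_lt_of_not_hasHalving hm hc hg.isChainColoring hno hfp hfb
    hpB hY hgY hbcard
  refine ⟨hPB, insert p P, _,
    hP₀.insert_pivot hc hg hfa hfb hap.le hpb hpB fun i hi => hlt i hi _ hgp,
    card_insert_of_notMem fun h => (hfp.2 p h).1 le_rfl, ?_⟩
  have hunion := card_union_le (colorsBeside g (T \ T₁) a p) (colorsBeside g (T \ T₁) p b)
  have hsdiff := le_card_sdiff (colorsBeside g (T \ T₁) a p ∪ colorsBeside g (T \ T₁) p b) (T \ T₁)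
  rw [card_sdiff_of_subset hT₁] at hsdiff
  lia

theorem hasHalving (hm : LFree (fun a b : α => a ≤ b) m) (hc : IsChainColoring c)
    (hg : IsGrundy (fun a b : α => a ≤ b) N g) (hP : IsPivotSystem c g B u₀ P T) (hs : 0 < s)
    {r : ℕ} (hB : #B ≤ 2 * (#P + r))
    (hT : r * (6 * w * ((2 * m * w + 1) * s)) + 2 * w * ((2 * m * w + 1) * s) ≤ #T) :
    HasHalving c g B s := by
  induction r generalizing P T with
  | zero =>
    by_contra hno
    exact (hP.exists_card_succ_of_not_hasHalving hm hc hg hs (by lia) hno).1.not_ge hB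
  | succ r ih =>
    by_contra hno
    obtain ⟨-, P', T', hP', hcard, hle⟩ :=
      hP.exists_card_succ_of_not_hasHalving hm hc hg hs (by lia) hno
    rw [Nat.succ_mul] at hT
    exact hno (ih hP' (by lia) (by lia))

end IsPivotSystem

-- At most `⌈#B / 2⌉` pivots can be needed.
theorem IsHomogeneous.hasHalving (hm : LFree (fun a b : α => a ≤ b) m) (hc : IsChainColoring c)
    (hg : IsGrundy (fun a b : α => a ≤ b) N g) {U : Finset α} (hU : IsHomogeneous c g B U)
    (hu₀ : u₀ ∈ U) (hs : 0 < s) (hcard : (3 * w ^ 2 + 5 * w) * (2 * m * w + 1) * s ≤ #U) :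
    HasHalving c g B s := by
  have hP : IsPivotSystem c g B u₀ ∅ (U.image g) :=
    ⟨by simp, by simp, forall_mem_image.2 fun u hu => ⟨u, rfl, hU.2 u hu u₀ hu₀, by simp⟩⟩
  refine hP.hasHalving hm hc hg hs (r := (#B + 1) / 2) (by rw [card_empty]; lia) ?_
  rw [card_image_of_injOn hU.1]
  have hr : 2 * ((#B + 1) / 2) ≤ w + 1 := by
    have := card_finset_fin_le B
    lia
  calc (#B + 1) / 2 * (6 * w * ((2 * m * w + 1) * s)) + 2 * w * ((2 * m * w + 1) * s)
    _ = 2 * ((#B + 1) / 2) * (3 * w * ((2 * m * w + 1) * s)) + 2 * w * ((2 * m * w + 1) * s) := by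
      ring
    _ ≤ (w + 1) * (3 * w * ((2 * m * w + 1) * s)) + 2 * w * ((2 * m * w + 1) * s) := by gcongr
    _ = (3 * w ^ 2 + 5 * w) * (2 * m * w + 1) * s := by ring
    _ ≤ #U := hcard

theorem IsHomogeneous.card_lt (hw : 0 < w) (hm : LFree (fun a b : α => a ≤ b) m)
    (hc : IsChainColoring c) (hg : IsGrundy (fun a b : α => a ≤ b) N g) {U : Finset α}
    (hU : IsHomogeneous c g B U) {r : ℕ} (hB : #B < 2 ^ (r + 1)) :
    #U < 2 * ((3 * w ^ 2 + 5 * w) * (2 * m * w + 1)) ^ r := by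
  induction r generalizing B U with
  | zero =>
    have := hU.card_le_one hg hc (by lia)
    lia
  | succ r ih =>
    set M := (3 * w ^ 2 + 5 * w) * (2 * m * w + 1)
    by_contra! hle
    obtain ⟨u₀, hu₀⟩ : U.Nonempty := card_pos.1 (lt_of_lt_of_le (by positivity) hle)
    obtain ⟨B', U', hU', hB', hcard⟩ := hU.hasHalving hm hc hg hu₀ (s := 2 * M ^ r) (by positivity)
      ((by ring : M * (2 * M ^ r) = 2 * M ^ (r + 1)).trans_le hle)
    exact (ih hU' (by rw [pow_succ] at hB; lia)).not_ge hcard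

theorem IsGrundy.lt_of_lFree (hw : 0 < w) (hm : LFree (fun a b : α => a ≤ b) m)
    (hc : IsChainColoring c) (hg : IsGrundy (fun a b : α => a ≤ b) N g) :
    N < 2 * ((3 * w ^ 2 + 5 * w) * (2 * m * w + 1)) ^ Nat.log 2 w := by
  obtain ⟨U, hinj, himage, -⟩ := exists_finset_injOn_image_eq (g := g) (p := fun _ => True)
    (T := Icc 1 N) fun i hi =>
      (hg.2.1 i (mem_Icc.1 hi).1 (mem_Icc.1 hi).2).imp fun _ hv => ⟨hv, trivial⟩
  have hU : IsHomogeneous c g univ U :=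
    ⟨hinj, fun u _ v _ d hd => absurd (mem_univ (c d)) hd⟩
  calc N = #U := by rw [← card_image_of_injOn hinj, himage, Nat.card_Icc, Nat.add_sub_cancel]
    _ < _ := hU.card_lt hw hm hc hg (by simpa using Nat.lt_pow_succ_log_self one_lt_two w)

end Halving

section Numeric

theorem rpow_logb_comm {b x y : ℝ} (hx : 0 < x) (hy : 0 < y) :
    x ^ Real.logb b y = y ^ Real.logb b x := by
  rw [Real.rpow_def_of_pos hx, Real.rpow_def_of_pos hy, Real.logb, Real.logb, mul_div_left_comm]

theorem rpow_logb_two_mul_add {x y : ℝ} (hx : 0 < x) (hy : 0 < y) :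
    x ^ (2.5 * Real.logb 2 (2 * x) + 2 * Real.logb 2 y) =
      x ^ (2.5 : ℝ) * (x ^ (2.5 : ℝ) * y ^ 2) ^ Real.logb 2 x := by
  have hexp : 2.5 * Real.logb 2 (2 * x) + 2 * Real.logb 2 y =
      2.5 + Real.logb 2 (x ^ (2.5 : ℝ) * y ^ 2) := by
    rw [Real.logb_mul two_ne_zero hx.ne', Real.logb_mul (by positivity) (by positivity),
      Real.logb_rpow_eq_mul_logb_of_pos hx, Real.logb_pow, Real.logb_self_eq_one one_lt_two]
    push_cast
    ring
  rw [hexp, Real.rpow_add hx, rpow_logb_comm hx (by positivity)]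

theorem sq_rpow_five_halves {x : ℝ} (hx : 0 ≤ x) : (x ^ (2.5 : ℝ)) ^ 2 = x ^ 5 := by
  rw [← Real.rpow_mul_natCast hx, ← Real.rpow_natCast]
  norm_num

theorem mul_le_rpow_mul_sq {x : ℝ} (hx : 3 ≤ x) :
    (3 * x ^ 2 + 5 * x) * (2 * (2 * x ^ 2 + 1) * x + 1) ≤
      x ^ (2.5 : ℝ) * (2 * x ^ 2 + 1) ^ 2 := by
  obtain ⟨t, ht, rfl⟩ : ∃ t, 0 ≤ t ∧ x = t + 3 := ⟨x - 3, by linarith, by ring⟩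
  refine le_of_sq_le_sq ?_ (by positivity)
  rw [mul_pow ((t + 3) ^ (2.5 : ℝ)), sq_rpow_five_halves (by positivity), ← sub_nonneg]
  ring_nf
  positivity

-- For `w = 2` the bases do not compare and the leading `2 ^ 2.5` is needed.
theorem two_mul_pow_log_le {w : ℕ} (hw : 2 ≤ w) :
    2 * ((3 * (w : ℝ) ^ 2 + 5 * w) * (2 * (2 * w ^ 2 + 1) * w + 1)) ^ Nat.log 2 w ≤
      (w : ℝ) ^ (2.5 : ℝ) * ((w : ℝ) ^ (2.5 : ℝ) * (2 * w ^ 2 + 1) ^ 2) ^ Real.logb 2 w := by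
  obtain rfl | hw := hw.eq_or_lt
  · rw [Nat.cast_ofNat, Real.logb_self_eq_one one_lt_two, Real.rpow_one, ← mul_assoc, ← sq,
      sq_rpow_five_halves zero_le_two]
    norm_num
  have hw3 : (3 : ℝ) ≤ w := by exact_mod_cast hw
  have hle_rpow : (w : ℝ) ≤ w ^ (2.5 : ℝ) :=
    Real.self_le_rpow_of_one_le (by linarith) (by norm_num)
  have hone_le : 1 ≤ (w : ℝ) ^ (2.5 : ℝ) * (2 * w ^ 2 + 1) ^ 2 :=
    one_le_mul_of_one_le_of_one_le (by linarith) (one_le_pow₀ (by nlinarith))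
  gcongr
  · linarith
  calc ((3 * (w : ℝ) ^ 2 + 5 * w) * (2 * (2 * w ^ 2 + 1) * w + 1)) ^ Nat.log 2 w
    _ ≤ ((w : ℝ) ^ (2.5 : ℝ) * (2 * w ^ 2 + 1) ^ 2) ^ Nat.log 2 w :=
      pow_le_pow_left₀ (by positivity) (mul_le_rpow_mul_sq hw3) _
    _ = ((w : ℝ) ^ (2.5 : ℝ) * (2 * w ^ 2 + 1) ^ 2) ^ (Nat.log 2 w : ℝ) :=
      (Real.rpow_natCast _ _).symm
    _ ≤ ((w : ℝ) ^ (2.5 : ℝ) * (2 * w ^ 2 + 1) ^ 2) ^ Real.logb 2 w :=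
      Real.rpow_le_rpow_of_exponent_le hone_le (mod_cast Real.natLog_le_logb w 2)

theorem cast_le_rpow_of_lt {w N : ℕ} (hw : 1 ≤ w)
    (hN : N < 2 * ((3 * w ^ 2 + 5 * w) * (2 * (2 * w ^ 2 + 1) * w + 1)) ^ Nat.log 2 w) :
    (N : ℝ) ≤ (w : ℝ) ^
      (2.5 * Real.logb 2 (2 * (w : ℝ)) + 2 * Real.logb 2 (2 * (w : ℝ) ^ 2 + 1)) := by
  obtain rfl | hw := hw.eq_or_lt
  · have : N ≤ 1 := by simpa [Nat.lt_succ_iff] using hN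
    simpa using this
  rw [rpow_logb_two_mul_add (by positivity) (by positivity)]
  exact le_trans (by exact_mod_cast hN.le) (two_mul_pow_log_le hw)

end Numeric

/-- every `N`-Grundy coloring of a regular poset of width
`w ≥ 1` satisfies `N ≤ w^(2.5·lg(2w) + 2·lg(2w²+1))`. -/
theorem stmt_13 {α : Type} [Fintype α] (le : α → α → Prop)
    (hle : IsPartialOrder α le) (w : ℕ) (hw : 1 ≤ w) {n : ℕ}
    (A : Fin n → Finset α) (hreg : IsRegularPoset le w A)
    (N : ℕ) (g : α → ℕ) (hg : IsGrundy le N g) :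
    (N : ℝ) ≤ (w : ℝ) ^
      (2.5 * Real.logb 2 (2 * (w : ℝ)) +
        2 * Real.logb 2 (2 * (w : ℝ) ^ 2 + 1)) := by
  let _ : PartialOrder α :=
    { le := le
      le_refl := hle.refl
      le_trans := hle.trans
      le_antisymm := hle.antisymm }
  obtain ⟨c, hc⟩ := hreg.exists_isChainColoring hw
  exact cast_le_rpow_of_lt hw (IsGrundy.lt_of_lFree hw hreg.lFree hc hg)
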